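/- The function A(t) = −t² φ0(i/t) − (36/π²) ψ_I(it) satisfies A(t) < 0 for every real t ∈ (0, ∞). (Here φ0(i/t) and ψ_I(it) are real, so A is real-valued.) -/

import Mathlib

open MeasureTheory

/-- Weight 2 Eisenstein series (quasimodular), via its `q`-expansion. -/
noncomputable def E2 (z : ℂ) : ℂ :=
  1 - 24 * ∑' n : ℕ+, ((ArithmeticFunction.sigma 1 n : ℕ) : ℂ) *
    Complex.exp (2 * (Real.pi : ℂ) * Complex.I * n * z)

/-- Weight 4 Eisenstein series, via its `q`-expansion. -/
noncomputable def E4 (z : ℂ) : ℂ :=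
  1 + 240 * ∑' n : ℕ+, ((ArithmeticFunction.sigma 3 n : ℕ) : ℂ) *
    Complex.exp (2 * (Real.pi : ℂ) * Complex.I * n * z)

/-- Weight 6 Eisenstein series, via its `q`-expansion. -/
noncomputable def E6 (z : ℂ) : ℂ :=
  1 - 504 * ∑' n : ℕ+, ((ArithmeticFunction.sigma 5 n : ℕ) : ℂ) *
    Complex.exp (2 * (Real.pi : ℂ) * Complex.I * n * z)

/-- The elliptic `j`-invariant. -/
noncomputable def jInv (z : ℂ) : ℂ := 1728 * E4 z ^ 3 / (E4 z ^ 3 - E6 z ^ 2)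

/-- The weakly holomorphic modular form `varphi_{-2}`. -/
noncomputable def varphim2 (z : ℂ) : ℂ := -1728 * E4 z * E6 z / (E4 z ^ 3 - E6 z ^ 2)

/-- The weakly holomorphic modular form `varphi_{-4}`. -/
noncomputable def varphim4 (z : ℂ) : ℂ := 1728 * E4 z ^ 2 / (E4 z ^ 3 - E6 z ^ 2)

/-- `φ_{-4} = varphi_{-4}`. -/
noncomputable def phim4 (z : ℂ) : ℂ := varphim4 z

/-- `φ_{-2} = varphi_{-4}·E2 + varphi_{-2}`. -/
noncomputable def phim2 (z : ℂ) : ℂ := varphim4 z * E2 z + varphim2 z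

/-- `φ_0 = varphi_{-4}·E2² + 2·varphi_{-2}·E2 + j − 1728`. -/
noncomputable def phi0 (z : ℂ) : ℂ :=
  varphim4 z * E2 z ^ 2 + 2 * varphim2 z * E2 z + jInv z - 1728
/-- The theta constant `θ00`. -/
noncomputable def theta00 (z : ℂ) : ℂ :=
  ∑' n : ℤ, Complex.exp ((Real.pi : ℂ) * Complex.I * (n : ℂ) ^ 2 * z)

/-- The theta constant `θ01`. -/
noncomputable def theta01 (z : ℂ) : ℂ :=
  ∑' n : ℤ, (-1 : ℂ) ^ n * Complex.exp ((Real.pi : ℂ) * Complex.I * (n : ℂ) ^ 2 * z)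

/-- The theta constant `θ10`. -/
noncomputable def theta10 (z : ℂ) : ℂ :=
  ∑' n : ℤ, Complex.exp ((Real.pi : ℂ) * Complex.I * ((n : ℂ) + 1/2) ^ 2 * z)

/-- `ψ_I = 128(θ00⁴+θ01⁴)/θ10⁸ + 128(θ01⁴−θ10⁴)/θ00⁸`. -/
noncomputable def psiI (z : ℂ) : ℂ :=
  128 * (theta00 z ^ 4 + theta01 z ^ 4) / theta10 z ^ 8 +
    128 * (theta01 z ^ 4 - theta10 z ^ 4) / theta00 z ^ 8

/-- `ψ_T = 128(θ00⁴+θ01⁴)/θ10⁸ + 128(θ00⁴+θ10⁴)/θ01⁸`. -/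
noncomputable def psiT (z : ℂ) : ℂ :=
  128 * (theta00 z ^ 4 + theta01 z ^ 4) / theta10 z ^ 8 +
    128 * (theta00 z ^ 4 + theta10 z ^ 4) / theta01 z ^ 8

/-- `ψ_S = −128(θ00⁴+θ10⁴)/θ01⁸ − 128(θ10⁴−θ01⁴)/θ00⁸`. -/
noncomputable def psiS (z : ℂ) : ℂ :=
  -128 * (theta00 z ^ 4 + theta10 z ^ 4) / theta01 z ^ 8 -
    128 * (theta10 z ^ 4 - theta01 z ^ 4) / theta00 z ^ 8

/-- `A(t) = −t²φ₀(i/t) − (36/π²)ψ_I(it)`. -/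
noncomputable def Afn (t : ℝ) : ℂ :=
  -(t : ℂ) ^ 2 * phi0 (Complex.I / (t : ℂ)) - (36 / (Real.pi : ℂ) ^ 2) * psiI (Complex.I * (t : ℂ))

/-!
In the order of `ℂ`, where `0 < z` says that `z` is real and positive, the claim is `A(t) < 0`. It
holds because `0 ≤ φ₀` and `0 < ψ_I` on the positive imaginary axis, where all the `q`-series
involved are real.

* As `E4³ - E6² = 1728 Δ`, the function `φ₀` is a perfect square over the discriminant,
  `φ₀ = (E2 E4 - E6)² / Δ`, and the product formula for `Δ` shows that it is positive on the axis.
* Writing `a, b, c` for `θ00, θ01, θ10`, one has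
  `ψ_I / 128 = (a⁴ / c⁸ - c⁴ / a⁸) + b⁴ (1 / c⁸ + 1 / a⁸)`, which is positive as soon as
  `0 < c < a`. The inequality `θ10 < θ00` at `τ` is, by the transformation `τ ↦ -1 / τ`, the
  inequality `θ01 < θ00` at `-1 / τ`, which holds term by term.
-/

open Complex ModularForm
open scoped ArithmeticFunction.sigma ComplexOrder Real UpperHalfPlane

lemma cexp_pos_of_im_eq_zero {z : ℂ} (hz : z.im = 0) : 0 < cexp z := by
  lift z to ℝ using hz
  rw [← Complex.ofReal_exp]
  exact zero_lt_real.2 (Real.exp_pos z)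

lemma sigma_qSeries_nonneg (k : ℕ) {z : ℂ} (hz : z.re = 0) :
    0 ≤ ∑' n : ℕ+, (σ k n : ℂ) * cexp (2 * π * I * n * z) :=
  tsum_nonneg fun n ↦ mul_nonneg (Nat.cast_nonneg _) (cexp_pos_of_im_eq_zero (by simp [hz])).le

lemma E2_im_eq_zero {z : ℂ} (hz : z.re = 0) : (E2 z).im = 0 := by
  simp [E2, ← (nonneg_iff.1 (sigma_qSeries_nonneg 1 hz)).2]

lemma E4_im_eq_zero {z : ℂ} (hz : z.re = 0) : (E4 z).im = 0 := by
  simp [E4, ← (nonneg_iff.1 (sigma_qSeries_nonneg 3 hz)).2]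

lemma E6_im_eq_zero {z : ℂ} (hz : z.re = 0) : (E6 z).im = 0 := by
  simp [E6, ← (nonneg_iff.1 (sigma_qSeries_nonneg 5 hz)).2]

lemma bernoulli_four : bernoulli 4 = -1 / 30 := by
  rw [bernoulli_eq_bernoulli'_of_ne_one (by norm_num), bernoulli'_four]

lemma bernoulli_six : bernoulli 6 = 1 / 42 := by
  rw [bernoulli_eq_bernoulli'_of_ne_one (by norm_num), bernoulli'_def]
  norm_num [Finset.sum_range_succ, Nat.choose, bernoulli'_eq_zero_of_odd (n := 5) (by decide)]

lemma eisensteinSeries_eq_qSeries {k : ℕ} (hk : 3 ≤ k) (hk2 : Even k) (z : ℍ) :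
    E hk z =
      1 - 2 * k / bernoulli k * ∑' n : ℕ+, (σ (k - 1) n : ℂ) * cexp (2 * π * I * n * z) := by
  rw [EisensteinSeries.q_expansion_bernoulli hk hk2]
  congr! 5 with n
  rw [zpow_natCast, ← Complex.exp_nat_mul]
  ring_nf

lemma E4_eq_E₄ (z : ℍ) : E4 z = E₄ z := by
  rw [eisensteinSeries_eq_qSeries _ (by decide), bernoulli_four, E4]
  norm_num

lemma E6_eq_E₆ (z : ℍ) : E6 z = E₆ z := by
  rw [eisensteinSeries_eq_qSeries _ (by decide), bernoulli_six, E6]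
  norm_num

lemma E4_cube_sub_E6_sq_eq_discriminant (z : ℍ) : E4 z ^ 3 - E6 z ^ 2 = 1728 * discriminant z := by
  rw [E4_eq_E₄, E6_eq_E₆, discriminant_eq_E₄_cube_sub_E₆_sq]
  ring

lemma discriminant_pos {z : ℍ} (hz : z.re = 0) : 0 < discriminant z := by
  have hq : 0 < Function.Periodic.qParam 1 z := cexp_pos_of_im_eq_zero (by simp [hz])
  refine lt_of_le_of_ne ?_ (discriminant_ne_zero z).symm
  rw [discriminant_eq_q_prod]
  refine mul_nonneg hq.le (tprod_nonneg fun n ↦ ?_)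
  -- The factor `(1 - qⁿ⁺¹) ^ 24` is an even power of a real number.
  have hqn : (eta_q n z).im = 0 := (nonneg_iff.1 (pow_nonneg hq.le _)).2.symm
  rw [pow_mul _ 12 2, sq_nonneg_iff]
  lift eta_q n z to ℝ using hqn with r
  norm_cast

lemma phi0_eq_sq_div_discriminant (z : ℍ) : phi0 z = (E2 z * E4 z - E6 z) ^ 2 / discriminant z := by
  have hΔ := discriminant_ne_zero z
  rw [phi0, varphim4, varphim2, jInv, E4_cube_sub_E6_sq_eq_discriminant]
  field_simp
  linear_combination E4_cube_sub_E6_sq_eq_discriminant z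

lemma phi0_nonneg {z : ℂ} (hre : z.re = 0) (him : 0 < z.im) : 0 ≤ phi0 z := by
  lift z to ℍ using him
  rw [phi0_eq_sq_div_discriminant]
  refine div_nonneg (sq_nonneg_iff.2 ?_) (discriminant_pos hre).le
  simp [E2_im_eq_zero hre, E4_im_eq_zero hre, E6_im_eq_zero hre]

lemma cpow_ofReal_pos {z : ℂ} (hz : 0 < z) (x : ℝ) : 0 < z ^ (x : ℂ) := by
  lift z to ℝ using (pos_iff.1 hz).2.symm
  rw [zero_lt_real] at hz
  rw [← ofReal_cpow hz.le]
  exact zero_lt_real.2 (Real.rpow_pos_of_pos hz x)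

lemma jacobiTheta₂_term_pos (n : ℤ) {z τ : ℂ} (hz : z.re = 0) (hτ : τ.re = 0) :
    0 < jacobiTheta₂_term n z τ :=
  cexp_pos_of_im_eq_zero (by simp [hz, hτ, pow_two])

lemma jacobiTheta₂_pos {z τ : ℂ} (hz : z.re = 0) (hre : τ.re = 0) (him : 0 < τ.im) :
    0 < jacobiTheta₂ z τ :=
  ((summable_jacobiTheta₂_term_iff z τ).2 him).tsum_pos
    (fun n ↦ (jacobiTheta₂_term_pos n hz hre).le) 0 (jacobiTheta₂_term_pos 0 hz hre)

lemma jacobiTheta₂_term_half (n : ℤ) (τ : ℂ) :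
    jacobiTheta₂_term n (1 / 2) τ = (-1) ^ n * jacobiTheta₂_term n 0 τ := by
  rw [jacobiTheta₂_term, jacobiTheta₂_term, ← Complex.exp_pi_mul_I, ← Complex.exp_int_mul,
    ← Complex.exp_add]
  ring_nf

lemma jacobiTheta₂_half_lt_jacobiTheta₂_zero {τ : ℂ} (hre : τ.re = 0) (him : 0 < τ.im) :
    jacobiTheta₂ (1 / 2) τ < jacobiTheta₂ 0 τ := by
  have hpos (n : ℤ) : 0 < jacobiTheta₂_term n 0 τ := jacobiTheta₂_term_pos n rfl hre
  refine Summable.tsum_lt_tsum (i := 1) (fun n ↦ ?_) ?_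
    ((summable_jacobiTheta₂_term_iff _ τ).2 him) ((summable_jacobiTheta₂_term_iff _ τ).2 him)
  · rw [jacobiTheta₂_term_half]
    rcases Int.even_or_odd n with hn | hn
    · rw [hn.neg_one_zpow, one_mul]
    · rw [hn.neg_one_zpow, neg_one_mul]
      exact (neg_lt_self (hpos n)).le
  · rw [jacobiTheta₂_term_half, zpow_one, neg_one_mul]
    exact neg_lt_self (hpos 1)

lemma theta00_eq_jacobiTheta₂ (τ : ℂ) : theta00 τ = jacobiTheta₂ 0 τ :=
  jacobiTheta_eq_jacobiTheta₂ τ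

lemma theta01_eq_jacobiTheta₂ (τ : ℂ) : theta01 τ = jacobiTheta₂ (1 / 2) τ :=
  tsum_congr fun n ↦ by
    rw [jacobiTheta₂_term_half]
    simp [jacobiTheta₂_term]

lemma theta10_eq_jacobiTheta₂ (τ : ℂ) :
    theta10 τ = cexp (π * I * τ / 4) * jacobiTheta₂ (τ / 2) τ := by
  rw [theta10, jacobiTheta₂, ← tsum_mul_left]
  refine tsum_congr fun n ↦ ?_
  rw [jacobiTheta₂_term, ← Complex.exp_add]
  ring_nf

lemma theta00_eq_mul_theta00_neg_inv (τ : ℂ) :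
    theta00 τ = 1 / (-I * τ) ^ (1 / 2 : ℂ) * theta00 (-1 / τ) := by
  simpa [theta00_eq_jacobiTheta₂] using jacobiTheta₂_functional_equation 0 τ

lemma theta10_eq_mul_theta01_neg_inv {τ : ℂ} (hτ : τ ≠ 0) :
    theta10 τ = 1 / (-I * τ) ^ (1 / 2 : ℂ) * theta01 (-1 / τ) := by
  have hexp : -π * I * (τ / 2) ^ 2 / τ = -(π * I * τ / 4) := by
    field_simp
    norm_num
  rw [theta10_eq_jacobiTheta₂, theta01_eq_jacobiTheta₂, jacobiTheta₂_functional_equation, hexp,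
    div_right_comm, div_self hτ, Complex.exp_neg]
  field_simp

lemma theta10_pos {τ : ℂ} (hre : τ.re = 0) (him : 0 < τ.im) : 0 < theta10 τ := by
  rw [theta10_eq_jacobiTheta₂]
  exact mul_pos (cexp_pos_of_im_eq_zero (by simp [hre])) (jacobiTheta₂_pos (by simp [hre]) hre him)

lemma theta01_lt_theta00 {τ : ℂ} (hre : τ.re = 0) (him : 0 < τ.im) : theta01 τ < theta00 τ := by
  rw [theta01_eq_jacobiTheta₂, theta00_eq_jacobiTheta₂]
  exact jacobiTheta₂_half_lt_jacobiTheta₂_zero hre him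

lemma theta10_lt_theta00 {τ : ℂ} (hre : τ.re = 0) (him : 0 < τ.im) : theta10 τ < theta00 τ := by
  have hτ : τ ≠ 0 := fun h ↦ by simp [h] at him
  have hpos : 0 < -I * τ := pos_iff.2 (by simp [hre, him])
  have hroot : 0 < (-I * τ) ^ (1 / 2 : ℂ) := by simpa using cpow_ofReal_pos hpos (1 / 2)
  rw [theta10_eq_mul_theta01_neg_inv hτ, theta00_eq_mul_theta00_neg_inv τ]
  gcongr
  apply theta01_lt_theta00
  · simp [hre, div_re]
  · simpa [div_im, neg_div] using div_pos him (normSq_pos.2 hτ)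

lemma theta_quotient_pos {K : Type*} [Field K] [LinearOrder K] [IsStrictOrderedRing K] {a c : K}
    (b : K) (hc : 0 < c) (hca : c < a) : 0 < (a ^ 4 + b ^ 4) / c ^ 8 + (b ^ 4 - c ^ 4) / a ^ 8 := by
  have ha : 0 < a := hc.trans hca
  have hlt : c ^ 4 / a ^ 8 < a ^ 4 / c ^ 8 := by gcongr
  calc 0 < (a ^ 4 / c ^ 8 - c ^ 4 / a ^ 8) + b ^ 4 * (1 / c ^ 8 + 1 / a ^ 8) :=
        add_pos_of_pos_of_nonneg (sub_pos.2 hlt) (by positivity)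
    _ = (a ^ 4 + b ^ 4) / c ^ 8 + (b ^ 4 - c ^ 4) / a ^ 8 := by ring

lemma psiI_pos {τ : ℂ} (hre : τ.re = 0) (him : 0 < τ.im) : 0 < psiI τ := by
  have h10 := theta10_pos hre him
  have h01 := theta01_lt_theta00 hre him
  have h00 := theta10_lt_theta00 hre him
  rw [psiI, mul_div_assoc, mul_div_assoc, ← mul_add]
  refine mul_pos (by norm_num) ?_
  lift theta10 τ to ℝ using (pos_iff.1 h10).2.symm with c
  lift theta00 τ to ℝ using (pos_iff.1 (h10.trans h00)).2.symm with a
  lift theta01 τ to ℝ using (lt_def.1 h01).2 with b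
  exact_mod_cast zero_lt_real.2 (theta_quotient_pos b (zero_lt_real.1 h10) (real_lt_real.1 h00))

/-- The function `A(t) = −t²φ₀(i/t) − (36/π²)ψ_I(it)` is real-valued and satisfies `A(t) < 0`
for every `t ∈ (0, ∞)`. -/
theorem Afn_neg (t : ℝ) (ht : 0 < t) : (Afn t).im = 0 ∧ (Afn t).re < 0 := by
  have hphi : 0 ≤ phi0 (I / t) := phi0_nonneg (by simp) (by simpa using ht)
  have hpsi : 0 < psiI (I * t) := psiI_pos (by simp) (by simpa using ht)
  have htsq : 0 ≤ (t : ℂ) ^ 2 := sq_nonneg_iff.2 (ofReal_im t)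
  have hpi : 0 < 36 / (π : ℂ) ^ 2 := by exact_mod_cast (by positivity : 0 < 36 / π ^ 2)
  have hA : Afn t < 0 := calc
    Afn t = -(t ^ 2 * phi0 (I / t) + 36 / π ^ 2 * psiI (I * t)) := by
      rw [Afn]
      ring
    _ < 0 := neg_neg_of_pos (add_pos_of_nonneg_of_pos (mul_nonneg htsq hphi) (mul_pos hpi hpsi))
  exact (neg_iff.1 hA).symm
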